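/- Let d ≥ 1, let α ∈ ℕ^d be a multi-index, and let Φ : [0,∞) → ℝ be a smooth bounded function with bounded derivative satisfying Φ'(t) ≥ 0 for all t ≥ 0. Then Φ(0) V_α(0) + (1/2) ∫_0^∞ Φ'(t/2) V_α(t) dt ≥ 2^d ∫_0^∞ Φ(t) e^{−t} dt. -/

import Mathlib

open MeasureTheory

noncomputable section

/-- The `n`-th Laguerre polynomial `L_n(x) = Σ_{k=0}^n (n choose k) (−x)^k / k!`. -/
def laguerreFun (n : ℕ) (x : ℝ) : ℝ :=
  ∑ k ∈ Finset.range (n + 1), (n.choose k : ℝ) * (-x) ^ k / (k.factorial : ℝ)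

/-- `T_n(X) = Σ_{k=0}^{n−1} (−1)^k L_k(X) + ((−1)^n/2) L_n(X)`. -/
def Tfun (n : ℕ) (X : ℝ) : ℝ :=
  (∑ k ∈ Finset.range n, (-1 : ℝ) ^ k * laguerreFun k X) +
    (-1 : ℝ) ^ n / 2 * laguerreFun n X

/-- `V_α(X) = 4 e^{−X/2} Σ_{k=0}^{d−1} C(d−1,k) T_{|α|+k}(X)`. -/
def Vfun (d : ℕ) (α : Fin d → ℕ) (X : ℝ) : ℝ :=
  4 * Real.exp (-X / 2) *
    ∑ k ∈ Finset.range d, ((d - 1).choose k : ℝ) * Tfun ((∑ j, α j) + k) X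

/-!
Twice the derivative of `T_n` is the alternating sum `S_n = Σ_{k<n} (-1)^k L_k`. Mehler's formula
`Σ He_n(z)² tⁿ / n! = (1 - t²)^{-1/2} exp(z² t / (1 + t))` shows that the product of two such
series, at `z` and at `w`, is `Σ S_{n+1}(z² + w²) tⁿ`; here both sides are seen to solve the same
first order linear differential equation in `t`. Hence `S_n ≥ 0` on `[0, ∞)`, so
`T_n ≥ T_n(0) = 1/2` there and `V_α(2t) ≥ 2^d e^{-t}`, with equality at `t = 0`. It remains to write
`∫ Φ(t) e^{-t} dt = Φ(0) + ∫ Φ'(t) e^{-t} dt` and to use that `Φ'` is nonnegative.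
-/

open PowerSeries
open Polynomial (aeval hermite)

/-! ### Laguerre functions -/

lemma laguerreFun_zero_right (n : ℕ) : laguerreFun n 0 = 1 := by
  simp [laguerreFun, Finset.sum_range_succ']

lemma laguerreFun_succ_sub (n : ℕ) (x : ℝ) :
    laguerreFun (n + 1) x - laguerreFun n x =
      ∑ k ∈ Finset.range (n + 1), (n.choose k : ℝ) * (-x) ^ (k + 1) / ((k + 1).factorial : ℝ) := by
  have padded : laguerreFun n x =
      ∑ k ∈ Finset.range (n + 2), (n.choose k : ℝ) * (-x) ^ k / (k.factorial : ℝ) := by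
    simp [laguerreFun, Finset.sum_range_succ _ (n + 1)]
  rw [padded, laguerreFun, ← Finset.sum_sub_distrib, Finset.sum_range_succ']
  simp only [Nat.choose_zero_right, sub_self, add_zero]
  refine Finset.sum_congr rfl fun k _ => ?_
  rw [Nat.choose_succ_succ]
  push_cast
  ring

lemma laguerreFun_add_two (n : ℕ) (x : ℝ) :
    (n + 2) * (laguerreFun (n + 2) x - laguerreFun (n + 1) x) =
      (n + 1) * (laguerreFun (n + 1) x - laguerreFun n x) - x * laguerreFun (n + 1) x := by
  have padded : laguerreFun (n + 1) x - laguerreFun n x =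
      ∑ k ∈ Finset.range (n + 2),
        (n.choose k : ℝ) * (-x) ^ (k + 1) / ((k + 1).factorial : ℝ) := by
    simp [laguerreFun_succ_sub, Finset.sum_range_succ _ (n + 1)]
  rw [laguerreFun_succ_sub (n + 1), padded, laguerreFun, Finset.mul_sum, Finset.mul_sum,
    Finset.mul_sum, ← Finset.sum_sub_distrib]
  refine Finset.sum_congr rfl fun k hk => ?_
  have hkn : k ≤ n + 1 := Nat.lt_succ_iff.mp (Finset.mem_range.mp hk)
  have absorption : (n.choose k : ℝ) * (n + 1) = (n + 1).choose k * (n + 1 - k) := by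
    have := congrArg (Nat.cast (R := ℝ)) (Nat.choose_mul_succ_eq n k)
    rwa [Nat.cast_mul, Nat.cast_mul, Nat.cast_sub hkn, Nat.cast_succ] at this
  rw [Nat.factorial_succ]
  push_cast
  field_simp
  linear_combination (-(-x) ^ (k + 1)) * absorption

lemma hasDerivAt_laguerreFun_succ_sub (n : ℕ) (x : ℝ) :
    HasDerivAt (fun y => laguerreFun (n + 1) y - laguerreFun n y) (-laguerreFun n x) x := by
  simp only [laguerreFun_succ_sub]
  rw [laguerreFun, ← Finset.sum_neg_distrib]
  refine HasDerivAt.fun_sum fun k _ => ?_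
  refine ((((hasDerivAt_id x).neg.pow (k + 1)).const_mul (n.choose k : ℝ)).div_const
    ((k + 1).factorial : ℝ)).congr_deriv ?_
  rw [Nat.factorial_succ]
  push_cast
  simp only [Pi.neg_apply, id_eq]
  field_simp

/-- The alternating sum `Σ_{k<n} (-1)^k L_k(x)`, twice the derivative of `T_n`. -/
def altLaguerreSum (n : ℕ) (x : ℝ) : ℝ :=
  ∑ k ∈ Finset.range n, (-1 : ℝ) ^ k * laguerreFun k x

lemma Tfun_succ (n : ℕ) (x : ℝ) :
    Tfun (n + 1) x = Tfun n x - (-1) ^ n / 2 * (laguerreFun (n + 1) x - laguerreFun n x) := by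
  simp only [Tfun, Finset.sum_range_succ]
  ring

lemma hasDerivAt_Tfun (n : ℕ) (x : ℝ) : HasDerivAt (Tfun n) (1 / 2 * altLaguerreSum n x) x := by
  induction n with
  | zero =>
    have : Tfun 0 = fun _ => (1 / 2 : ℝ) := by
      funext y
      simp [Tfun, laguerreFun]
    simpa [this, altLaguerreSum] using hasDerivAt_const x (1 / 2 : ℝ)
  | succ n ih =>
    rw [funext (Tfun_succ n)]
    refine (ih.sub ((hasDerivAt_laguerreFun_succ_sub n x).const_mul _)).congr_deriv ?_
    simp only [altLaguerreSum, Finset.sum_range_succ]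
    ring

lemma Tfun_zero_right (n : ℕ) : Tfun n 0 = 1 / 2 := by
  induction n with
  | zero => simp [Tfun, laguerreFun_zero_right]
  | succ n ih => simp [Tfun_succ, ih, laguerreFun_zero_right]

/-! ### First order linear differential equations for power series -/

lemma coeff_X_mul_derivative {R : Type*} [CommSemiring R] (F : R⟦X⟧) (n : ℕ) :
    coeff n (X * d⁄dX R F) = n * coeff n F := by
  cases n with
  | zero => simp
  | succ n => rw [coeff_succ_X_mul, coeff_derivative, Nat.cast_succ, mul_comm]

lemma eq_of_mul_derivative_eq_mul {K : Type*} [Field K] [CharZero K] {P Q F G : K⟦X⟧}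
    (hP : P ≠ 0) (hF : P * d⁄dX K F = Q * F) (hG : P * d⁄dX K G = Q * G)
    (hFG : constantCoeff F = constantCoeff G) (hG₀ : constantCoeff G ≠ 0) : F = G := by
  have wronskian : d⁄dX K F * G = F * d⁄dX K G :=
    mul_left_cancel₀ hP (by linear_combination G * hF - F * hG)
  have hGinv : G * G⁻¹ = 1 := PowerSeries.mul_inv_cancel G hG₀
  have quotient : F * G⁻¹ = 1 := by
    apply derivative.ext
    · rw [Derivation.leibniz, derivative_inv', Derivation.map_one_eq_zero]
      simp only [smul_eq_mul]
      linear_combination G⁻¹ ^ 2 * wronskian - G⁻¹ * d⁄dX K F * hGinv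
    · simp [hFG, hG₀]
  linear_combination G * quotient - F * hGinv

/-! ### Squares of Hermite polynomials -/

lemma derivative_hermite_succ (n : ℕ) :
    Polynomial.derivative (hermite (n + 1)) = (n + 1) * hermite n := by
  induction n with
  | zero => simp
  | succ n ih =>
    rw [Polynomial.hermite_succ (n + 1), map_sub, Polynomial.derivative_mul, ih,
      Polynomial.derivative_mul]
    simp only [Polynomial.derivative_X, map_add, Polynomial.derivative_natCast,
      Polynomial.derivative_one]
    push_cast
    linear_combination -((n : Polynomial ℤ) + 1) * Polynomial.hermite_succ n

lemma aeval_hermite_add_two {R : Type*} [CommRing R] (z : R) (n : ℕ) :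
    aeval z (hermite (n + 2)) =
      z * aeval z (hermite (n + 1)) - (n + 1) * aeval z (hermite n) := by
  rw [Polynomial.hermite_succ (n + 1), derivative_hermite_succ]
  simp

section HermiteSquares

variable {K : Type*} [Field K]

/-- The diagonal Mehler series `Σ He_n(z)² tⁿ / n!` of the probabilists' Hermite polynomials. -/
def hermiteSqSeries (z : K) : K⟦X⟧ :=
  mk fun n => aeval z (hermite n) ^ 2 / n.factorial

/-- The companion `Σ He_n(z) He_{n+1}(z) tⁿ / n!` of `hermiteSqSeries`: the two satisfy a closed
first order system. -/
def hermiteMulSuccSeries (z : K) : K⟦X⟧ :=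
  mk fun n => aeval z (hermite n) * aeval z (hermite (n + 1)) / n.factorial

lemma constantCoeff_hermiteSqSeries (z : K) : constantCoeff (hermiteSqSeries z) = 1 := by
  simp [hermiteSqSeries, ← coeff_zero_eq_constantCoeff_apply]

variable [CharZero K]

lemma one_add_X_mul_hermiteMulSuccSeries (z : K) :
    (1 + X) * hermiteMulSuccSeries z = C z * hermiteSqSeries z := by
  rw [add_mul, one_mul]
  ext n
  cases n with
  | zero => simp [hermiteMulSuccSeries, hermiteSqSeries]
  | succ n =>
    have := Nat.cast_add_one_ne_zero (R := K) n
    have := Nat.cast_ne_zero (R := K).mpr n.factorial_ne_zero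
    simp only [map_add, coeff_succ_X_mul, coeff_C_mul, hermiteMulSuccSeries, hermiteSqSeries,
      coeff_mk, aeval_hermite_add_two, Nat.factorial_succ, Nat.cast_mul, Nat.cast_succ]
    field_simp
    ring

lemma one_sub_X_sq_mul_derivative_hermiteSqSeries (z : K) :
    (1 - X ^ 2) * d⁄dX K (hermiteSqSeries z) =
      C z * ((1 - X) * hermiteMulSuccSeries z) + X * hermiteSqSeries z := by
  rw [sub_mul, sub_mul, one_mul, one_mul, sq, mul_assoc]
  ext n
  cases n with
  | zero =>
    simp [-coeff_zero_eq_constantCoeff, coeff_zero_X_mul, coeff_derivative, hermiteMulSuccSeries,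
      hermiteSqSeries, sq]
  | succ n =>
    have := Nat.cast_add_one_ne_zero (R := K) n
    have : (n : K) + 1 + 1 ≠ 0 := mod_cast Nat.cast_add_one_ne_zero (R := K) (n + 1)
    have := Nat.cast_ne_zero (R := K).mpr n.factorial_ne_zero
    simp only [map_add, map_sub, coeff_succ_X_mul, coeff_X_mul_derivative, coeff_derivative,
      coeff_C_mul, hermiteMulSuccSeries, hermiteSqSeries, coeff_mk, aeval_hermite_add_two,
      Nat.factorial_succ, Nat.cast_mul, Nat.cast_succ]
    field_simp
    ring

lemma mul_derivative_hermiteSqSeries (z : K) :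
    (1 - X) * (1 + X) ^ 2 * d⁄dX K (hermiteSqSeries z) =
      (C z ^ 2 * (1 - X) + X * (1 + X)) * hermiteSqSeries z := by
  linear_combination (1 + X) * one_sub_X_sq_mul_derivative_hermiteSqSeries z +
    C z * (1 - X) * one_add_X_mul_hermiteMulSuccSeries z

end HermiteSquares

/-! ### Positivity of the alternating Laguerre sums -/

/-- The generating series `Σ (-1)ⁿ L_n(x) tⁿ`. -/
def altLaguerreSeries (x : ℝ) : ℝ⟦X⟧ :=
  mk fun n => (-1) ^ n * laguerreFun n x

/-- The generating series of the partial sums of `altLaguerreSeries`. The index is shifted because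
`altLaguerreSum (n + 1)` is the sum up to and including `n`. -/
def altLaguerreSumSeries (x : ℝ) : ℝ⟦X⟧ :=
  mk fun n => altLaguerreSum (n + 1) x

lemma constantCoeff_altLaguerreSumSeries (x : ℝ) :
    constantCoeff (altLaguerreSumSeries x) = 1 := by
  simp [altLaguerreSumSeries, altLaguerreSum, laguerreFun, ← coeff_zero_eq_constantCoeff_apply]

lemma mul_derivative_altLaguerreSeries (x : ℝ) :
    (1 + X) ^ 2 * d⁄dX ℝ (altLaguerreSeries x) = (C x - (1 + X)) * altLaguerreSeries x := by
  suffices d⁄dX ℝ (altLaguerreSeries x) + C 2 * (X * d⁄dX ℝ (altLaguerreSeries x)) +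
      X * (X * d⁄dX ℝ (altLaguerreSeries x)) =
      C x * altLaguerreSeries x - altLaguerreSeries x - X * altLaguerreSeries x by
    rw [map_ofNat C 2] at this
    linear_combination this
  ext n
  cases n with
  | zero =>
    simp [-coeff_zero_eq_constantCoeff, coeff_zero_X_mul, coeff_derivative, altLaguerreSeries,
      laguerreFun, Finset.sum_range_succ, sub_eq_add_neg]
  | succ n =>
    simp only [map_add, map_sub, coeff_succ_X_mul, coeff_C_mul, coeff_X_mul_derivative,
      coeff_derivative, altLaguerreSeries, coeff_mk, pow_succ, Nat.cast_succ]
    linear_combination (-1) ^ n * laguerreFun_add_two n x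

lemma one_sub_X_mul_altLaguerreSumSeries (x : ℝ) :
    (1 - X) * altLaguerreSumSeries x = altLaguerreSeries x := by
  rw [sub_mul, one_mul]
  ext n
  cases n with
  | zero => simp [altLaguerreSumSeries, altLaguerreSeries, altLaguerreSum]
  | succ n =>
    simp [altLaguerreSumSeries, altLaguerreSeries, altLaguerreSum, coeff_succ_X_mul,
      Finset.sum_range_succ _ (n + 1)]

lemma mul_derivative_altLaguerreSumSeries (x : ℝ) :
    (1 - X) * (1 + X) ^ 2 * d⁄dX ℝ (altLaguerreSumSeries x) =
      (C x * (1 - X) + 2 * X * (1 + X)) * altLaguerreSumSeries x := by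
  have ode := mul_derivative_altLaguerreSeries x
  rw [← one_sub_X_mul_altLaguerreSumSeries, Derivation.leibniz, map_sub, derivative_X,
    Derivation.map_one_eq_zero] at ode
  simp only [smul_eq_mul] at ode
  linear_combination ode

lemma hermiteSqSeries_mul_hermiteSqSeries (z w : ℝ) :
    hermiteSqSeries z * hermiteSqSeries w = altLaguerreSumSeries (z ^ 2 + w ^ 2) := by
  refine eq_of_mul_derivative_eq_mul ?_ ?_ (mul_derivative_altLaguerreSumSeries _) ?_ ?_
  · intro h
    simpa using congrArg constantCoeff h
  · rw [Derivation.leibniz, map_add, map_pow, map_pow]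
    simp only [smul_eq_mul]
    linear_combination hermiteSqSeries w * mul_derivative_hermiteSqSeries z +
      hermiteSqSeries z * mul_derivative_hermiteSqSeries w
  · simp [constantCoeff_hermiteSqSeries, constantCoeff_altLaguerreSumSeries]
  · simp [constantCoeff_altLaguerreSumSeries]

lemma altLaguerreSum_succ_add_sq (n : ℕ) (z w : ℝ) :
    altLaguerreSum (n + 1) (z ^ 2 + w ^ 2) = ∑ p ∈ Finset.HasAntidiagonal.antidiagonal n,
      aeval z (hermite p.1) ^ 2 / p.1.factorial * (aeval w (hermite p.2) ^ 2 / p.2.factorial) := by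
  simpa [altLaguerreSumSeries, hermiteSqSeries, coeff_mul] using
    (congrArg (coeff n) (hermiteSqSeries_mul_hermiteSqSeries z w)).symm

lemma altLaguerreSum_nonneg (n : ℕ) {x : ℝ} (hx : 0 ≤ x) : 0 ≤ altLaguerreSum n x := by
  cases n with
  | zero => simp [altLaguerreSum]
  | succ n =>
    have sum_sq := altLaguerreSum_succ_add_sq n √x 0
    rw [Real.sq_sqrt hx, zero_pow two_ne_zero, add_zero] at sum_sq
    rw [sum_sq]
    positivity

/-! ### The functions `T_n` and `V_α` -/

lemma half_le_Tfun (n : ℕ) {x : ℝ} (hx : 0 ≤ x) : 1 / 2 ≤ Tfun n x := by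
  have mono : MonotoneOn (Tfun n) (Set.Ici 0) := by
    refine monotoneOn_of_hasDerivWithinAt_nonneg (convex_Ici 0)
      (fun y _ => (hasDerivAt_Tfun n y).continuousAt.continuousWithinAt)
      (fun y _ => (hasDerivAt_Tfun n y).hasDerivWithinAt) fun y hy => ?_
    exact mul_nonneg (by norm_num) (altLaguerreSum_nonneg n (interior_subset hy))
  exact Tfun_zero_right n ▸ mono Set.self_mem_Ici hx hx

lemma sum_choose_mul_half {d : ℕ} (hd : 1 ≤ d) :
    4 * ∑ k ∈ Finset.range d, ((d - 1).choose k : ℝ) * (1 / 2) = 2 ^ d := by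
  obtain ⟨e, rfl⟩ := Nat.exists_eq_add_of_le' hd
  have sum_choose : ∑ k ∈ Finset.range (e + 1), (e.choose k : ℝ) = 2 ^ e :=
    mod_cast Nat.sum_range_choose e
  rw [← Finset.sum_mul, Nat.add_sub_cancel, sum_choose]
  ring

lemma Vfun_zero_right {d : ℕ} (hd : 1 ≤ d) (α : Fin d → ℕ) : Vfun d α 0 = 2 ^ d := by
  simp [Vfun, Tfun_zero_right, ← sum_choose_mul_half hd]

lemma two_pow_mul_exp_neg_le_Vfun_two_mul {d : ℕ} (hd : 1 ≤ d) (α : Fin d → ℕ) {x : ℝ}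
    (hx : 0 ≤ x) : 2 ^ d * Real.exp (-x) ≤ Vfun d α (2 * x) := by
  rw [← sum_choose_mul_half hd, mul_right_comm, Vfun, neg_div, mul_div_cancel_left₀ x two_ne_zero]
  gcongr
  exact half_le_Tfun _ (mul_nonneg zero_le_two hx)

lemma integrableOn_pow_mul_exp_neg_mul (k : ℕ) {b : ℝ} (hb : 0 < b) :
    IntegrableOn (fun t : ℝ => t ^ k * Real.exp (-b * t)) (Set.Ioi 0) := by
  simpa using integrableOn_rpow_mul_exp_neg_mul_rpow (s := k) (p := 1)
    (by linarith [k.cast_nonneg (α := ℝ)]) one_pos hb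

lemma integrableOn_laguerreFun_mul_exp_neg_mul (n : ℕ) {b : ℝ} (hb : 0 < b) :
    IntegrableOn (fun t => laguerreFun n t * Real.exp (-b * t)) (Set.Ioi 0) := by
  have expand (t : ℝ) : laguerreFun n t * Real.exp (-b * t) = ∑ k ∈ Finset.range (n + 1),
      (n.choose k * (-1) ^ k / k.factorial : ℝ) * (t ^ k * Real.exp (-b * t)) := by
    rw [laguerreFun, Finset.sum_mul]
    refine Finset.sum_congr rfl fun k _ => ?_
    rw [neg_pow]
    ring
  simp only [expand]
  exact integrable_finsetSum _ fun k _ => (integrableOn_pow_mul_exp_neg_mul k hb).const_mul _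

lemma integrableOn_Tfun_mul_exp_neg_mul (n : ℕ) {b : ℝ} (hb : 0 < b) :
    IntegrableOn (fun t => Tfun n t * Real.exp (-b * t)) (Set.Ioi 0) := by
  simp only [Tfun, add_mul, Finset.sum_mul, mul_assoc]
  exact (integrable_finsetSum _ fun k _ =>
    (integrableOn_laguerreFun_mul_exp_neg_mul k hb).const_mul _).add
      ((integrableOn_laguerreFun_mul_exp_neg_mul n hb).const_mul _)

lemma integrableOn_Vfun (d : ℕ) (α : Fin d → ℕ) : IntegrableOn (Vfun d α) (Set.Ioi 0) := by
  have expand (t : ℝ) : Vfun d α t = ∑ k ∈ Finset.range d, (4 * (d - 1).choose k : ℝ) *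
      (Tfun ((∑ j, α j) + k) t * Real.exp (-(1 / 2) * t)) := by
    rw [Vfun, Finset.mul_sum, show -t / 2 = -(1 / 2) * t by ring]
    exact Finset.sum_congr rfl fun k _ => by ring
  simp only [funext expand]
  exact integrable_finsetSum _ fun k _ =>
    (integrableOn_Tfun_mul_exp_neg_mul _ one_half_pos).const_mul _

lemma integrableOn_mul_Vfun (d : ℕ) (α : Fin d → ℕ) {f : ℝ → ℝ} (hf : Measurable f)
    (hf_bdd : ∃ C, ∀ t, 0 < t → |f t| ≤ C) :
    IntegrableOn (fun t => f t * Vfun d α t) (Set.Ioi 0) := by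
  obtain ⟨C, hC⟩ := hf_bdd
  refine Integrable.bdd_mul (c := C) (integrableOn_Vfun d α) hf.aestronglyMeasurable ?_
  filter_upwards [ae_restrict_mem measurableSet_Ioi] with t ht using hC t ht

lemma integrableOn_mul_exp_neg_of_mul_Vfun {d : ℕ} (hd : 1 ≤ d) (α : Fin d → ℕ) {f : ℝ → ℝ}
    (hf : Measurable f) (hint : IntegrableOn (fun t => f t * Vfun d α (2 * t)) (Set.Ioi 0)) :
    IntegrableOn (fun t => f t * Real.exp (-t)) (Set.Ioi 0) := by
  refine Integrable.mono hint (by fun_prop) ?_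
  filter_upwards [ae_restrict_mem measurableSet_Ioi] with t ht
  have exp_le : Real.exp (-t) ≤ Vfun d α (2 * t) :=
    (le_mul_of_one_le_left (Real.exp_nonneg _) (one_le_pow₀ one_le_two)).trans
      (two_pow_mul_exp_neg_le_Vfun_two_mul hd α (le_of_lt ht))
  rw [norm_mul, norm_mul]
  gcongr
  rwa [Real.norm_eq_abs, Real.abs_exp, Real.norm_of_nonneg ((Real.exp_nonneg _).trans exp_le)]

/-! ### Integrals over the half-line -/

lemma integrableOn_Ioi_mul_comp_mul_left_iff (g h : ℝ → ℝ) {a : ℝ} (ha : 0 < a) :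
    IntegrableOn (fun t => g t * h (a * t)) (Set.Ioi 0) ↔
      IntegrableOn (fun t => g (t / a) * h t) (Set.Ioi 0) := by
  have := integrableOn_Ioi_comp_mul_left_iff (fun t => g (t / a) * h t) 0 ha
  simpa only [mul_div_cancel_left₀ _ ha.ne', mul_zero] using this

lemma integral_Ioi_mul_comp_mul_left (g h : ℝ → ℝ) {a : ℝ} (ha : 0 < a) :
    ∫ t in Set.Ioi 0, g t * h (a * t) = a⁻¹ * ∫ t in Set.Ioi 0, g (t / a) * h t := by
  have := integral_comp_mul_left_Ioi (fun t => g (t / a) * h t) 0 ha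
  simpa only [mul_div_cancel_left₀ _ ha.ne', mul_zero, smul_eq_mul] using this

section Laplace

variable {f : ℝ → ℝ} {c : ℝ}

lemma hasDerivAt_sub_mul_exp_neg_mul {t : ℝ} (hf : DifferentiableAt ℝ f t) (a : ℝ) :
    HasDerivAt (fun s => (f s - a) * Real.exp (-(c * s)))
      (deriv f t * Real.exp (-(c * t)) - c * ((f t - a) * Real.exp (-(c * t)))) t := by
  refine ((hf.hasDerivAt.sub_const a).mul ((hasDerivAt_id t).const_mul c).neg.exp).congr_deriv ?_
  simp only [Pi.neg_apply, id_eq]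
  ring

lemma continuousOn_sub_mul_exp_neg_mul {s : Set ℝ} (hf : ContinuousOn f s) (a : ℝ) :
    ContinuousOn (fun t => (f t - a) * Real.exp (-(c * t))) s := by
  fun_prop

lemma sub_mul_exp_neg_mul_nonneg {t : ℝ}
    (hf : ContinuousOn f (Set.Ici 0)) (hf' : DifferentiableOn ℝ f (Set.Ioi 0))
    (hf'_nonneg : ∀ t, 0 < t → 0 ≤ deriv f t) (ht : 0 ≤ t) :
    0 ≤ (f t - f 0) * Real.exp (-(c * t)) := by
  have mono : f 0 ≤ f t := monotoneOn_of_deriv_nonneg (convex_Ici 0) hf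
    (by rwa [interior_Ici]) (by simpa using hf'_nonneg) Set.self_mem_Ici ht ht
  exact mul_nonneg (sub_nonneg.mpr mono) (Real.exp_nonneg _)

-- The boundary term `(f T - f 0) e^{-cT}` of the integration by parts is nonnegative and can be
-- dropped, so the truncated integrals of the increment are bounded uniformly in `T`.
lemma mul_intervalIntegral_sub_mul_exp_neg_mul_le {T : ℝ} (hT : 0 ≤ T)
    (hf : ContinuousOn f (Set.Ici 0)) (hf' : DifferentiableOn ℝ f (Set.Ioi 0))
    (hf'_nonneg : ∀ t, 0 < t → 0 ≤ deriv f t)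
    (hint : IntegrableOn (fun t => deriv f t * Real.exp (-(c * t))) (Set.Ioi 0)) :
    c * ∫ t in 0..T, (f t - f 0) * Real.exp (-(c * t)) ≤
      ∫ t in Set.Ioi 0, deriv f t * Real.exp (-(c * t)) := by
  have cont : ContinuousOn (fun t => (f t - f 0) * Real.exp (-(c * t))) (Set.Icc 0 T) :=
    continuousOn_sub_mul_exp_neg_mul (hf.mono Set.Icc_subset_Ici_self) _
  have int_deriv : IntervalIntegrable (fun t => deriv f t * Real.exp (-(c * t))) volume 0 T :=
    (intervalIntegrable_iff_integrableOn_Ioc_of_le hT).mpr (hint.mono_set Set.Ioc_subset_Ioi_self)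
  have int_sub : IntervalIntegrable
      (fun t => c * ((f t - f 0) * Real.exp (-(c * t)))) volume 0 T :=
    (cont.intervalIntegrable_of_Icc hT).const_mul c
  have boundary : 0 ≤ (f T - f 0) * Real.exp (-(c * T)) :=
    sub_mul_exp_neg_mul_nonneg hf hf' hf'_nonneg hT
  have ftc := intervalIntegral.integral_eq_sub_of_hasDerivAt_of_le hT cont
    (fun t ht => hasDerivAt_sub_mul_exp_neg_mul (hf'.differentiableAt (Ioi_mem_nhds ht.1)) _)
    (int_deriv.sub int_sub)
  rw [intervalIntegral.integral_sub int_deriv int_sub, intervalIntegral.integral_const_mul,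
    sub_self, zero_mul, sub_zero] at ftc
  have truncate : ∫ t in 0..T, deriv f t * Real.exp (-(c * t)) ≤
      ∫ t in Set.Ioi 0, deriv f t * Real.exp (-(c * t)) := by
    rw [intervalIntegral.integral_of_le hT]
    refine setIntegral_mono_set hint ?_ Set.Ioc_subset_Ioi_self.eventuallyLE
    filter_upwards [ae_restrict_mem measurableSet_Ioi] with t ht
    exact mul_nonneg (hf'_nonneg t ht) (Real.exp_nonneg _)
  linarith

lemma integrableOn_mul_exp_neg_mul_of_deriv_nonneg (hc : 0 < c)
    (hf : ContinuousOn f (Set.Ici 0)) (hf' : DifferentiableOn ℝ f (Set.Ioi 0))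
    (hf'_nonneg : ∀ t, 0 < t → 0 ≤ deriv f t)
    (hint : IntegrableOn (fun t => deriv f t * Real.exp (-(c * t))) (Set.Ioi 0)) :
    IntegrableOn (fun t => f t * Real.exp (-(c * t))) (Set.Ioi 0) := by
  have cont := continuousOn_sub_mul_exp_neg_mul (c := c) hf (f 0)
  have increment : IntegrableOn (fun t => (f t - f 0) * Real.exp (-(c * t))) (Set.Ioi 0) := by
    refine integrableOn_Ioi_of_intervalIntegral_norm_bounded
      (c⁻¹ * ∫ t in Set.Ioi 0, deriv f t * Real.exp (-(c * t))) 0 (fun T : ℝ =>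
        ((cont.mono Set.Icc_subset_Ici_self).integrableOn_Icc).mono_set Set.Ioc_subset_Icc_self)
      Filter.tendsto_id ?_
    filter_upwards [Filter.eventually_ge_atTop 0] with T hT
    have norm_eq : ∫ t in 0..T, ‖(f t - f 0) * Real.exp (-(c * t))‖ =
        ∫ t in 0..T, (f t - f 0) * Real.exp (-(c * t)) := by
      refine intervalIntegral.integral_congr fun t ht => ?_
      rw [Set.uIcc_of_le hT] at ht
      exact Real.norm_of_nonneg (sub_mul_exp_neg_mul_nonneg hf hf' hf'_nonneg ht.1)
    rw [id, norm_eq, le_inv_mul_iff₀ hc]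
    exact mul_intervalIntegral_sub_mul_exp_neg_mul_le hT hf hf' hf'_nonneg hint
  have constant : IntegrableOn (fun t => f 0 * Real.exp (-(c * t))) (Set.Ioi 0) := by
    simpa only [neg_mul] using! (integrableOn_exp_mul_Ioi (neg_neg_of_pos hc) 0).const_mul (f 0)
  refine (increment.add constant).congr_fun (fun t _ => ?_) measurableSet_Ioi
  simp only [Pi.add_apply]
  ring

lemma mul_integral_mul_exp_neg_mul_eq (hc : 0 < c)
    (hf : ContinuousOn f (Set.Ici 0)) (hf' : DifferentiableOn ℝ f (Set.Ioi 0))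
    (hf'_nonneg : ∀ t, 0 < t → 0 ≤ deriv f t)
    (hint : IntegrableOn (fun t => deriv f t * Real.exp (-(c * t))) (Set.Ioi 0)) :
    c * ∫ t in Set.Ioi 0, f t * Real.exp (-(c * t)) =
      f 0 + ∫ t in Set.Ioi 0, deriv f t * Real.exp (-(c * t)) := by
  have int_f := integrableOn_mul_exp_neg_mul_of_deriv_nonneg hc hf hf' hf'_nonneg hint
  have cont : ContinuousOn (fun t => f t * Real.exp (-(c * t))) (Set.Ici 0) := by
    simpa using continuousOn_sub_mul_exp_neg_mul hf 0
  have deriv_eq (t : ℝ) (ht : t ∈ Set.Ioi 0) : HasDerivAt (fun s => f s * Real.exp (-(c * s)))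
      (deriv f t * Real.exp (-(c * t)) - c * (f t * Real.exp (-(c * t)))) t := by
    simpa using hasDerivAt_sub_mul_exp_neg_mul (hf'.differentiableAt (Ioi_mem_nhds ht)) 0
  have int_deriv := hint.sub (int_f.const_mul c)
  have ftc := integral_Ioi_of_hasDerivAt_of_tendsto (cont 0 Set.self_mem_Ici) deriv_eq int_deriv
    (tendsto_zero_of_hasDerivAt_of_integrableOn_Ioi deriv_eq int_deriv int_f)
  rw [integral_sub hint (int_f.const_mul c), integral_const_mul, mul_zero, neg_zero, Real.exp_zero,
    mul_one] at ftc
  linarith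

end Laplace

theorem key_inequality_general {d : ℕ} (hd : 1 ≤ d) (α : Fin d → ℕ) {Φ : ℝ → ℝ}
    (hΦ : ContinuousOn Φ (Set.Ici 0)) (hΦ' : DifferentiableOn ℝ Φ (Set.Ioi 0))
    (hΦ'_nonneg : ∀ t, 0 < t → 0 ≤ deriv Φ t)
    (hint : IntegrableOn (fun t => deriv Φ (t / 2) * Vfun d α t) (Set.Ioi 0)) :
    2 ^ d * ∫ t in Set.Ioi (0 : ℝ), Φ t * Real.exp (-t) ≤
      Φ 0 * Vfun d α 0 + (1 / 2) * ∫ t in Set.Ioi (0 : ℝ), deriv Φ (t / 2) * Vfun d α t := by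
  have int_V : IntegrableOn (fun t => deriv Φ t * Vfun d α (2 * t)) (Set.Ioi 0) :=
    (integrableOn_Ioi_mul_comp_mul_left_iff _ _ two_pos).mpr hint
  have int_exp := integrableOn_mul_exp_neg_of_mul_Vfun hd α (measurable_deriv Φ) int_V
  have laplace : ∫ t in Set.Ioi 0, Φ t * Real.exp (-t) =
      Φ 0 + ∫ t in Set.Ioi 0, deriv Φ t * Real.exp (-t) := by
    simpa using mul_integral_mul_exp_neg_mul_eq one_pos hΦ hΦ' hΦ'_nonneg (by simpa using int_exp)
  calc 2 ^ d * ∫ t in Set.Ioi (0 : ℝ), Φ t * Real.exp (-t)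
      = Φ 0 * Vfun d α 0 + ∫ t in Set.Ioi 0, deriv Φ t * (2 ^ d * Real.exp (-t)) := by
        rw [laplace, Vfun_zero_right hd]
        simp only [mul_left_comm _ ((2 : ℝ) ^ d), integral_const_mul]
        ring
    _ ≤ Φ 0 * Vfun d α 0 + ∫ t in Set.Ioi 0, deriv Φ t * Vfun d α (2 * t) := by
        have int_two_pow_exp :
            IntegrableOn (fun t => deriv Φ t * (2 ^ d * Real.exp (-t))) (Set.Ioi 0) := by
          simpa only [mul_left_comm] using! int_exp.const_mul (2 ^ d)
        refine add_le_add_right (setIntegral_mono_on int_two_pow_exp int_V measurableSet_Ioi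
          fun t ht => ?_) _
        exact mul_le_mul_of_nonneg_left (two_pow_mul_exp_neg_le_Vfun_two_mul hd α ht.le)
          (hΦ'_nonneg t ht)
    _ = Φ 0 * Vfun d α 0 + (1 / 2) * ∫ t in Set.Ioi (0 : ℝ), deriv Φ (t / 2) * Vfun d α t := by
        rw [integral_Ioi_mul_comp_mul_left _ _ two_pos, one_div]

theorem key_inequality (d : ℕ) (hd : 1 ≤ d) (α : Fin d → ℕ) (Φ : ℝ → ℝ)
    (hΦ_smooth : ContDiff ℝ (⊤ : ℕ∞) Φ)
    (hΦ_bdd : ∃ C : ℝ, ∀ t : ℝ, 0 ≤ t → |Φ t| ≤ C)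
    (hΦ'_bdd : ∃ C : ℝ, ∀ t : ℝ, 0 ≤ t → |deriv Φ t| ≤ C)
    (hΦ'_nonneg : ∀ t : ℝ, 0 ≤ t → 0 ≤ deriv Φ t) :
    (2 : ℝ) ^ d * ∫ t in Set.Ioi (0 : ℝ), Φ t * Real.exp (-t) ≤
      Φ 0 * Vfun d α 0 + (1 / 2) * ∫ t in Set.Ioi (0 : ℝ), deriv Φ (t / 2) * Vfun d α t := by
  exact key_inequality_general hd α hΦ_smooth.continuous.continuousOn
    (hΦ_smooth.differentiable (by simp)).differentiableOn (fun t ht => hΦ'_nonneg t ht.le)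
    (integrableOn_mul_Vfun d α ((measurable_deriv Φ).comp (measurable_id.div_const 2))
      (hΦ'_bdd.imp fun _ hC t ht => hC _ (half_pos ht).le))
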